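/- Let L ≥ 1, let V_1,…,V_L and C_1,…,C_L be positive reals, and let ε > 0. Define N_ℓ* := ε^{−2} (Σ_{j=1}^L √(V_j C_j)) · √(V_ℓ / C_ℓ) for ℓ = 1,…,L. Then Σ_{ℓ=1}^L V_ℓ / N_ℓ* = ε², Σ_{ℓ=1}^L N_ℓ* C_ℓ = ε^{−2} (Σ_{ℓ=1}^L √(V_ℓ C_ℓ))², and for any positive reals N_1,…,N_L satisfying the variance constraint Σ_{ℓ=1}^L V_ℓ / N_ℓ ≤ ε², the total cost satisfies Σ_{ℓ=1}^L N_ℓ C_ℓ ≥ ε^{−2} (Σ_{ℓ=1}^L √(V_ℓ C_ℓ))². In other words, N_ℓ* minimizes the total cost Σ N_ℓ C_ℓ subject to the estimator variance bound Σ V_ℓ / N_ℓ ≤ ε². -/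

import Mathlib

open Real

/-!
Writing `√(V_ℓ C_ℓ) = √(V_ℓ / N_ℓ) √(N_ℓ C_ℓ)`, the Cauchy–Schwarz inequality bounds
`(Σ_ℓ √(V_ℓ C_ℓ))²` by the product of estimator variance and total cost, for every choice of sample
sizes. Equality holds when `N_ℓ` is proportional to `√(V_ℓ / C_ℓ)`, and the variance constraint then
fixes the factor of proportionality.
-/

section SqrtDiv

variable {x y : ℝ}

theorem sqrt_div_mul_eq_sqrt_mul (hy : 0 ≤ y) : √(x / y) * y = √(x * y) := by
  rw [Real.sqrt_div' x hy, Real.sqrt_mul' x hy, div_mul_eq_mul_div, mul_div_assoc, Real.div_sqrt]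

theorem div_sqrt_div_eq_sqrt_mul (hy : 0 ≤ y) : x / √(x / y) = √(x * y) := by
  rw [Real.sqrt_div' x hy, Real.sqrt_mul' x hy, div_div_eq_mul_div, mul_div_right_comm,
    Real.div_sqrt]

end SqrtDiv

section SampleSizes

variable {ι : Type*} {s : Finset ι} {V C N : ι → ℝ} {ε : ℝ}

theorem sq_sum_sqrt_mul_le_sum_div_mul_sum_mul (hV : ∀ i ∈ s, 0 ≤ V i) (hC : ∀ i ∈ s, 0 ≤ C i)
    (hN : ∀ i ∈ s, 0 < N i) :
    (∑ i ∈ s, √(V i * C i)) ^ 2 ≤ (∑ i ∈ s, V i / N i) * ∑ i ∈ s, N i * C i := by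
  refine Finset.sum_sq_le_sum_mul_sum_of_sq_le_mul s
    (fun i hi ↦ div_nonneg (hV i hi) (hN i hi).le)
    (fun i hi ↦ mul_nonneg (hN i hi).le (hC i hi)) fun i hi ↦ le_of_eq ?_
  calc √(V i * C i) ^ 2 = V i * C i := Real.sq_sqrt (mul_nonneg (hV i hi) (hC i hi))
    _ = V i / N i * (N i * C i) := by rw [← mul_assoc, div_mul_cancel₀ _ (hN i hi).ne']

theorem le_sum_mul_of_sum_div_le_sq (hV : ∀ i ∈ s, 0 ≤ V i) (hC : ∀ i ∈ s, 0 ≤ C i)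
    (hN : ∀ i ∈ s, 0 < N i) (hε : ε ≠ 0) (hvar : ∑ i ∈ s, V i / N i ≤ ε ^ 2) :
    ε⁻¹ ^ 2 * (∑ i ∈ s, √(V i * C i)) ^ 2 ≤ ∑ i ∈ s, N i * C i := by
  have hcost : 0 ≤ ∑ i ∈ s, N i * C i :=
    Finset.sum_nonneg fun i hi ↦ mul_nonneg (hN i hi).le (hC i hi)
  rw [inv_pow, inv_mul_le_iff₀ (by positivity)]
  calc (∑ i ∈ s, √(V i * C i)) ^ 2
      ≤ (∑ i ∈ s, V i / N i) * ∑ i ∈ s, N i * C i :=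
        sq_sum_sqrt_mul_le_sum_div_mul_sum_mul hV hC hN
    _ ≤ ε ^ 2 * ∑ i ∈ s, N i * C i := by gcongr

/-- The sample sizes `N_ℓ*` that are optimal for level variances `V`, level costs `C` and
mean-square-error tolerance `ε²`. They are real numbers, not rounded to integers, and the levels may
be indexed by any finite set `s`. -/
noncomputable def optimalSampleSize (s : Finset ι) (V C : ι → ℝ) (ε : ℝ) (i : ι) : ℝ :=
  ε⁻¹ ^ 2 * (∑ j ∈ s, √(V j * C j)) * √(V i / C i)

theorem sum_optimalSampleSize_mul (hC : ∀ i ∈ s, 0 ≤ C i) :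
    ∑ i ∈ s, optimalSampleSize s V C ε i * C i = ε⁻¹ ^ 2 * (∑ i ∈ s, √(V i * C i)) ^ 2 := by
  set S := ∑ i ∈ s, √(V i * C i)
  calc ∑ i ∈ s, optimalSampleSize s V C ε i * C i
      = ∑ i ∈ s, ε⁻¹ ^ 2 * S * √(V i * C i) := Finset.sum_congr rfl fun i hi ↦ by
        rw [optimalSampleSize, mul_assoc, sqrt_div_mul_eq_sqrt_mul (hC i hi)]
    _ = ε⁻¹ ^ 2 * S * S := by rw [← Finset.mul_sum]
    _ = ε⁻¹ ^ 2 * S ^ 2 := by ring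

theorem sum_div_optimalSampleSize (hC : ∀ i ∈ s, 0 ≤ C i) (hVC : ∑ i ∈ s, √(V i * C i) ≠ 0) :
    ∑ i ∈ s, V i / optimalSampleSize s V C ε i = ε ^ 2 := by
  set S := ∑ i ∈ s, √(V i * C i)
  calc ∑ i ∈ s, V i / optimalSampleSize s V C ε i
      = ∑ i ∈ s, √(V i * C i) / (ε⁻¹ ^ 2 * S) := Finset.sum_congr rfl fun i hi ↦ by
        rw [optimalSampleSize, div_mul_eq_div_div_swap, div_sqrt_div_eq_sqrt_mul (hC i hi)]
    _ = S / (ε⁻¹ ^ 2 * S) := by rw [← Finset.sum_div]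
    _ = ε ^ 2 := by rw [div_mul_cancel_right₀ hVC, inv_pow, inv_inv]

end SampleSizes

/-- Optimality of the MLMC sample sizes
`N_ℓ* = ε⁻² (Σ_j √(V_j C_j)) √(V_ℓ / C_ℓ)`: they meet the variance constraint with equality,
attain total cost `ε⁻² (Σ_ℓ √(V_ℓ C_ℓ))²`, and any positive sample sizes satisfying the
variance constraint `Σ_ℓ V_ℓ / N_ℓ ≤ ε²` have at least that total cost. -/
theorem mlmc_optimal_sample_sizes
    (L : ℕ) (hL : 1 ≤ L) (V C : Fin L → ℝ)
    (hV : ∀ ℓ, 0 < V ℓ) (hC : ∀ ℓ, 0 < C ℓ)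
    (ε : ℝ) (hε : 0 < ε)
    (Nstar : Fin L → ℝ)
    (hNstar : ∀ ℓ, Nstar ℓ = ε⁻¹ ^ 2 * (∑ j, Real.sqrt (V j * C j)) * Real.sqrt (V ℓ / C ℓ)) :
    (∑ ℓ, V ℓ / Nstar ℓ = ε ^ 2)
      ∧ (∑ ℓ, Nstar ℓ * C ℓ = ε⁻¹ ^ 2 * (∑ ℓ, Real.sqrt (V ℓ * C ℓ)) ^ 2)
      ∧ ∀ N : Fin L → ℝ, (∀ ℓ, 0 < N ℓ) → (∑ ℓ, V ℓ / N ℓ ≤ ε ^ 2) →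
          ε⁻¹ ^ 2 * (∑ ℓ, Real.sqrt (V ℓ * C ℓ)) ^ 2 ≤ ∑ ℓ, N ℓ * C ℓ := by
  obtain rfl : Nstar = optimalSampleSize Finset.univ V C ε := funext hNstar
  have : NeZero L := ⟨Nat.one_le_iff_ne_zero.mp hL⟩
  have hsum : 0 < ∑ ℓ, √(V ℓ * C ℓ) :=
    Finset.sum_pos (fun ℓ _ ↦ Real.sqrt_pos.mpr (mul_pos (hV ℓ) (hC ℓ))) Finset.univ_nonempty
  exact ⟨sum_div_optimalSampleSize (fun ℓ _ ↦ (hC ℓ).le) hsum.ne',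
    sum_optimalSampleSize_mul fun ℓ _ ↦ (hC ℓ).le,
    fun N hN hvar ↦ le_sum_mul_of_sum_div_le_sq (fun ℓ _ ↦ (hV ℓ).le) (fun ℓ _ ↦ (hC ℓ).le)
      (fun ℓ _ ↦ hN ℓ) hε.ne' hvar⟩
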